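/- Let d ≥ 1 and let u : ℝ → 𝒮(ℝ^d; ℂ) be a Schwartz solution of the linear Schrödinger equation. Let A, B ⊆ ℝ^d be nonempty sets with dist(A,B) > 0. Then for every t ≥ 0, ‖u(t)‖_{L²(B)} ≤ (2 t ‖∇u(0)‖_{L²(ℝ^d)}) / dist(A,B) + ‖u(0)‖_{L²(ℝ^d ∖ A)}. -/

import Mathlib

open MeasureTheory Filter
open scoped RealInnerProductSpace

noncomputable section

abbrev Ed (d : ℕ) : Type := EuclideanSpace ℝ (Fin d)

/-- The `i`-th standard basis vector of `ℝ^d`. -/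
def stdBasis {d : ℕ} (i : Fin d) : Ed d := EuclideanSpace.single i 1

/-- The `i`-th spatial partial derivative. -/
def pd {d : ℕ} (f : Ed d → ℂ) (i : Fin d) (x : Ed d) : ℂ :=
  fderiv ℝ f x (stdBasis i)

/-- The spatial Laplacian. -/
def lap {d : ℕ} (f : Ed d → ℂ) (x : Ed d) : ℂ :=
  ∑ i, pd (pd f i) i x

/-- Squared (Euclidean) pointwise norm of the spatial gradient. -/
def gradNormSq {d : ℕ} (f : Ed d → ℂ) (x : Ed d) : ℝ :=
  ∑ i, ‖pd f i x‖ ^ 2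

/-- `L²` norm of `f` restricted to a set `s`. -/
def L2On {d : ℕ} (s : Set (Ed d)) (f : Ed d → ℂ) : ℝ :=
  (∫ x in s, ‖f x‖ ^ 2) ^ (1/2 : ℝ)

/-- `L²` norm of `f` on all of `ℝ^d`. -/
def L2 {d : ℕ} (f : Ed d → ℂ) : ℝ :=
  (∫ x, ‖f x‖ ^ 2) ^ (1/2 : ℝ)

/-- `L²` norm of the spatial gradient of `f`. -/
def gradL2 {d : ℕ} (f : Ed d → ℂ) : ℝ :=
  (∫ x, gradNormSq f x) ^ (1/2 : ℝ)

/-- Distance between two sets. -/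
def setDist {d : ℕ} (A B : Set (Ed d)) : ℝ :=
  sInf (Set.image2 dist A B)

/-- A Schwartz solution of the linear Schrödinger equation:
smooth in time-space and `∂ₜ u = i Δ u`. -/
def IsLinSchrodSol (d : ℕ) (u : ℝ → SchwartzMap (Ed d) ℂ) : Prop :=
  ContDiff ℝ (⊤ : ℕ∞) (fun p : ℝ × Ed d => u p.1 p.2) ∧
  ∀ t x, deriv (fun s => u s x) t = Complex.I * lap (u t) x

/-- A Schwartz solution of the nonlinear Schrödinger equation with parameters `lam, σ`:
smooth in time-space and `∂ₜ u = i (Δ u + lam |u|^σ u)`. -/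
def IsNLSSol (d : ℕ) (lam σ : ℝ) (u : ℝ → SchwartzMap (Ed d) ℂ) : Prop :=
  ContDiff ℝ (⊤ : ℕ∞) (fun p : ℝ × Ed d => u p.1 p.2) ∧
  ∀ t x, deriv (fun s => u s x) t =
    Complex.I * (lap (u t) x + ((lam * ‖u t x‖ ^ σ : ℝ) : ℂ) * u t x)


/-- Baire-type lemma. -/
lemma baire_const (N : ℝ → ℝ) (hcl : ∀ n : ℕ, IsClosed {t | N t ≤ n})
    (hc : ∀ a b M, a ≤ b → (∀ t ∈ Set.Icc a b, N t ≤ M) → N a = N b) :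
    ∀ a b, ∃ M, ∀ t ∈ Set.Icc a b, N t ≤ M := by
  classical
  set U : Set ℝ := {t | ∃ M, ∀ᶠ s in nhds t, N s ≤ M} with hU
  have hUo : IsOpen U := by
    rw [isOpen_iff_mem_nhds]
    rintro t ⟨M, hM⟩
    filter_upwards [eventually_eventually_nhds.mpr hM] with s hs using ⟨M, hs⟩
  have hbd : ∀ a b, Set.Icc a b ⊆ U → ∃ M, ∀ t ∈ Set.Icc a b, N t ≤ M := by
    intro a b hab
    have : BddAbove (N '' Set.Icc a b) := by
      apply isCompact_Icc.induction_on (p := fun s => BddAbove (N '' s))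
      · simp
      · intro s t hst ht
        exact ht.mono (Set.image_mono hst)
      · intro s t hs ht
        rw [Set.image_union]; exact hs.union ht
      · intro t ht
        obtain ⟨M, hM⟩ := hab ht
        refine ⟨{s | N s ≤ M}, mem_nhdsWithin_of_mem_nhds hM, M, ?_⟩
        rintro _ ⟨s, hs, rfl⟩
        exact hs
    obtain ⟨M, hM⟩ := this
    exact ⟨M, fun t ht => hM ⟨t, ht, rfl⟩⟩
  have hloc : ∀ a b, a ≤ b → Set.Icc a b ⊆ U → N a = N b := by
    intro a b h hab
    obtain ⟨M, hM⟩ := hbd a b hab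
    exact hc a b M h hM
  suffices hE : Uᶜ = ∅ by
    intro a b
    apply hbd
    rw [Set.compl_empty_iff] at hE
    rw [hE]; exact Set.subset_univ _
  by_contra hne
  have hne : (Uᶜ).Nonempty := Set.nonempty_iff_ne_empty.mpr hne
  have hEc : IsClosed Uᶜ := hUo.isClosed_compl
  haveI : Nonempty ↥(Uᶜ) := hne.to_subtype
  haveI : CompleteSpace ↥(Uᶜ) := hEc.completeSpace_coe
  obtain ⟨n, ⟨t0, ht0E⟩, ht0⟩ := nonempty_interior_of_iUnion_of_closed
    (X := ↥(Uᶜ)) (f := fun n : ℕ => {t : ↥(Uᶜ) | N t ≤ n})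
    (fun n => (hcl n).preimage continuous_subtype_val)
    (by
      ext t
      simp only [Set.mem_iUnion, Set.mem_setOf_eq, Set.mem_univ, iff_true]
      exact exists_nat_ge _)
  rw [mem_interior_iff_mem_nhds, Metric.mem_nhds_iff] at ht0
  obtain ⟨δ, hδ, hball⟩ := ht0
  have hEn : ∀ s, s ∉ U → |s - t0| < δ → N s ≤ n := by
    intro s hs hd
    exact hball (show (⟨s, hs⟩ : ↥(Uᶜ)) ∈ Metric.ball _ δ by
      simpa [Metric.mem_ball, Subtype.dist_eq, Real.dist_eq] using hd)
  apply ht0E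
  refine ⟨n, Metric.eventually_nhds_iff.mpr ⟨δ, hδ, ?_⟩⟩
  intro s hs
  rw [Real.dist_eq] at hs
  by_cases hsU : s ∉ U
  · exact hEn s hsU hs
  push Not at hsU
  rcases le_total t0 s with h | h
  · -- right side
    have hcpt : IsCompact (Uᶜ ∩ Set.Icc t0 s) := isCompact_Icc.inter_left hEc
    obtain ⟨a, ha⟩ := hcpt.exists_isGreatest ⟨t0, ht0E, le_refl _, h⟩
    have haE := ha.1.1
    have ha1 := ha.1.2.1
    have has := ha.1.2.2
    have hr : ∀ r ∈ Set.Ioc a s, N r = N s := by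
      intro r hr
      apply hloc r s hr.2
      intro q hq
      by_contra hqU
      have := ha.2 ⟨hqU, by linarith [hr.1, hq.1], hq.2⟩
      linarith [hr.1, hq.1]
    have : N a = N s := by
      apply hc a s (max (N a) (N s)) has
      intro r hr'
      rcases eq_or_lt_of_le hr'.1 with h1 | h1
      · rw [← h1]; exact le_max_left _ _
      · rw [hr r ⟨h1, hr'.2⟩]; exact le_max_right _ _
    rw [← this]
    apply hEn a haE
    rw [abs_lt] at hs ⊢
    constructor <;> linarith
  · have hcpt : IsCompact (Uᶜ ∩ Set.Icc s t0) := isCompact_Icc.inter_left hEc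
    obtain ⟨a, ha⟩ := hcpt.exists_isLeast ⟨t0, ht0E, h, le_refl _⟩
    have haE := ha.1.1
    have ha1 := ha.1.2.2
    have has := ha.1.2.1
    have hr : ∀ r ∈ Set.Ico s a, N s = N r := by
      intro r hr
      apply hloc s r hr.1
      intro q hq
      by_contra hqU
      have := ha.2 ⟨hqU, hq.1, by linarith [hr.2, hq.2]⟩
      linarith [hr.2, hq.2]
    have : N s = N a := by
      apply hc s a (max (N a) (N s)) has
      intro r hr'
      rcases eq_or_lt_of_le hr'.2 with h1 | h1
      · rw [h1]; exact le_max_left _ _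
      · rw [← hr r ⟨hr'.1, h1⟩]; exact le_max_right _ _
    rw [this]
    apply hEn a haE
    rw [abs_lt] at hs ⊢
    constructor <;> linarith

open scoped SchwartzMap FourierTransform LineDeriv Laplacian

lemma expI_iter (n : ℕ) : iteratedDeriv n (fun s : ℝ => Complex.exp (Complex.I * s)) =
    fun s : ℝ => Complex.I ^ n * Complex.exp (Complex.I * s) := by
  induction n with
  | zero => simp
  | succ n ih =>
    rw [iteratedDeriv_succ, ih]
    ext s
    have h1 : HasDerivAt (fun s : ℝ => Complex.I * (s : ℂ)) Complex.I s := by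
      simpa using (Complex.ofRealCLM.hasDerivAt (x := s)).const_mul Complex.I
    have := (h1.cexp.const_mul (Complex.I ^ n)).deriv
    rw [this]; ring

lemma expI_temperate : (fun s : ℝ => Complex.exp (Complex.I * s)).HasTemperateGrowth := by
  refine ⟨(contDiff_const.mul Complex.ofRealCLM.contDiff).cexp, fun n => ⟨0, 1, fun x => ?_⟩⟩
  rw [norm_iteratedFDeriv_eq_norm_iteratedDeriv, expI_iter]
  simp [Complex.norm_exp]

/-- Phase function. -/
def ph {d : ℕ} (t : ℝ) (ξ : Ed d) : ℂ :=
  Complex.exp (Complex.I * ((4 * Real.pi ^ 2 * t * ‖ξ‖ ^ 2 : ℝ) : ℂ))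

lemma ph_norm {d : ℕ} (t : ℝ) (ξ : Ed d) : ‖ph t ξ‖ = 1 := by
  unfold ph
  rw [mul_comm, Complex.norm_exp_ofReal_mul_I]

lemma ph_temperate {d : ℕ} (t : ℝ) : (ph t : Ed d → ℂ).HasTemperateGrowth := by
  have h : (fun ξ : Ed d => (4 * Real.pi ^ 2 * t) * ‖ξ‖ ^ 2).HasTemperateGrowth := by fun_prop
  exact expI_temperate.comp h

/-- Backward free propagator. -/
def propa {d : ℕ} (t : ℝ) (f : 𝓢(Ed d, ℂ)) : 𝓢(Ed d, ℂ) :=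
  SchwartzMap.fourierMultiplierCLM ℂ (ph t) f

lemma propa_zero {d : ℕ} (f : 𝓢(Ed d, ℂ)) : propa 0 f = f := by
  have : (ph 0 : Ed d → ℂ) = fun _ => 1 := by ext; simp [ph]
  simp [propa, this]

lemma propa_eq {d : ℕ} (t : ℝ) (f : 𝓢(Ed d, ℂ)) (x : Ed d) :
    propa t f x = ∫ ξ, Complex.exp ((↑(2 * Real.pi * inner ℝ ξ x) * Complex.I)) *
      (ph t ξ * (𝓕 f) ξ) := by
  unfold propa
  rw [SchwartzMap.fourierMultiplierCLM_apply, SchwartzMap.fourierInv_coe, Real.fourierInv_eq']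
  simp only [SchwartzMap.smulLeftCLM_apply_apply (ph_temperate t), smul_eq_mul]

lemma propa_bound {d : ℕ} (f : 𝓢(Ed d, ℂ)) : ∃ C, ∀ t x, ‖propa t f x‖ ≤ C := by
  refine ⟨∫ ξ, ‖(𝓕 f) ξ‖, fun t x => ?_⟩
  rw [propa_eq]
  refine (norm_integral_le_integral_norm _).trans (le_of_eq ?_)
  congr 1
  ext ξ
  rw [norm_mul, norm_mul, ph_norm, Complex.norm_exp_ofReal_mul_I]; simp

lemma propa_fourier {d : ℕ} (t : ℝ) (f : 𝓢(Ed d, ℂ)) (ξ : Ed d) :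
    (𝓕 (propa t f)) ξ = ph t ξ * (𝓕 f) ξ := by
  unfold propa
  rw [SchwartzMap.fourierMultiplierCLM_apply, FourierTransform.fourier_fourierInv_eq,
    SchwartzMap.smulLeftCLM_apply_apply (ph_temperate t), smul_eq_mul]

lemma propa_norm {d : ℕ} (t : ℝ) (f : 𝓢(Ed d, ℂ)) :
    ∫ x, ‖propa t f x‖ ^ 2 = ∫ x, ‖f x‖ ^ 2 := by
  rw [← SchwartzMap.integral_norm_sq_fourier (propa t f), ← SchwartzMap.integral_norm_sq_fourier f]
  simp_rw [propa_fourier, norm_mul, ph_norm, one_mul]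

lemma propa_lineDeriv {d : ℕ} (t : ℝ) (f : 𝓢(Ed d, ℂ)) (m : Ed d) :
    ∂_{m} (propa t f) = propa t (∂_{m} f) := by
  have hi' : (fun ξ : Ed d => (inner ℝ ξ m : ℝ)).HasTemperateGrowth := by fun_prop
  have h : 𝓕 (∂_{m} (propa t f)) = 𝓕 (propa t (∂_{m} f)) := by
    ext ξ
    rw [propa_fourier, SchwartzMap.fourier_lineDerivOp_eq, SchwartzMap.fourier_lineDerivOp_eq,
      smul_apply, smul_apply, SchwartzMap.smulLeftCLM_apply_apply hi',
      SchwartzMap.smulLeftCLM_apply_apply hi', propa_fourier]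
    simp only [smul_eq_mul, Complex.real_smul]
    ring
  have h2 := congrArg (fun g : 𝓢(Ed d, ℂ) => 𝓕⁻ g) h
  simpa only [FourierTransform.fourierInv_fourier_eq] using h2

lemma lap_eq {d : ℕ} (f : 𝓢(Ed d, ℂ)) (x : Ed d) : lap f x = (Δ f) x := by
  rw [SchwartzMap.laplacian_eq_sum (EuclideanSpace.basisFun (Fin d) ℝ)]
  simp [lap, pd, stdBasis, SchwartzMap.lineDerivOp_apply_eq_fderiv]
  rfl

lemma pd_eq {d : ℕ} (f : 𝓢(Ed d, ℂ)) (i : Fin d) : pd f i = ∂_{stdBasis i} f := rfl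

lemma propa_lap {d : ℕ} (t : ℝ) (f : 𝓢(Ed d, ℂ)) :
    Δ (propa t f) = propa t (Δ f) := by
  rw [SchwartzMap.laplacian_eq_sum (EuclideanSpace.basisFun (Fin d) ℝ),
    SchwartzMap.laplacian_eq_sum (EuclideanSpace.basisFun (Fin d) ℝ)]
  simp_rw [propa_lineDeriv]
  unfold propa
  rw [map_sum]

lemma fourier_lap {d : ℕ} (f : 𝓢(Ed d, ℂ)) (ξ : Ed d) :
    (𝓕 (Δ f)) ξ = - ((4 * Real.pi ^ 2 * ‖ξ‖ ^ 2 : ℝ) : ℂ) * (𝓕 f) ξ := by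
  have h : (fun ξ : Ed d => ‖ξ‖ ^ 2).HasTemperateGrowth := by fun_prop
  rw [SchwartzMap.laplacian_eq_fourierMultiplierCLM, FourierTransform.fourier_smul,
    SchwartzMap.fourierMultiplierCLM_apply, FourierTransform.fourier_fourierInv_eq]
  rw [smul_apply, SchwartzMap.smulLeftCLM_apply_apply h]
  simp
  ring

lemma propa_hasDeriv {d : ℕ} (t : ℝ) (f : 𝓢(Ed d, ℂ)) (x : Ed d) :
    HasDerivAt (fun s => propa s f x) (-Complex.I * (Δ (propa t f)) x) t := by
  rw [propa_lap, propa_eq]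
  simp_rw [propa_eq]
  have hph : ∀ s : ℝ, Continuous (ph s : Ed d → ℂ) := fun s => (ph_temperate s).1.continuous
  have key := hasDerivAt_integral_of_dominated_loc_of_deriv_le (μ := (volume : Measure (Ed d)))
    (F := fun s ξ => Complex.exp ((↑(2 * Real.pi * inner ℝ ξ x) * Complex.I)) *
      (ph s ξ * (𝓕 f) ξ))
    (F' := fun s ξ => -Complex.I * (Complex.exp ((↑(2 * Real.pi * inner ℝ ξ x) * Complex.I)) *
      (ph s ξ * (𝓕 (Δ f)) ξ))) (x₀ := t) (s := Set.univ) (bound := fun ξ => ‖(𝓕 (Δ f)) ξ‖)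
    Filter.univ_mem ?_ ?_ ?_ ?_ ?_ ?_
  · rw [← integral_const_mul]
    exact key.2
  · refine Filter.Eventually.of_forall fun s => Continuous.aestronglyMeasurable ?_
    have := hph s
    have := (𝓕 f).continuous
    fun_prop
  · have h1 : Integrable (fun ξ => (𝓕 f) ξ) (volume : Measure (Ed d)) := (𝓕 f).integrable
    refine h1.mono ?_ ?_
    · have := hph t
      have := (𝓕 f).continuous
      exact Continuous.aestronglyMeasurable (by fun_prop)
    · refine Filter.Eventually.of_forall fun ξ => ?_
      rw [norm_mul, norm_mul, ph_norm, Complex.norm_exp_ofReal_mul_I]; simp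
  · have := hph t
    have := (𝓕 (Δ f)).continuous
    exact Continuous.aestronglyMeasurable (by fun_prop)
  · refine Filter.Eventually.of_forall fun ξ s _ => ?_
    rw [norm_mul, norm_mul, norm_mul, ph_norm, Complex.norm_exp_ofReal_mul_I]; simp
  · exact (𝓕 (Δ f)).integrable.norm
  · refine Filter.Eventually.of_forall fun ξ s _ => ?_
    simp only [fourier_lap]
    have h0 : HasDerivAt (fun s : ℝ => (4 * Real.pi ^ 2 * s * ‖ξ‖ ^ 2 : ℝ))
        (4 * Real.pi ^ 2 * ‖ξ‖ ^ 2) s := by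
      have := ((hasDerivAt_id s).const_mul (4 * Real.pi ^ 2)).mul_const (‖ξ‖ ^ 2)
      simpa using this
    have h1 : HasDerivAt (fun s : ℝ => ph s ξ)
      (ph s ξ * (Complex.I * ((4 * Real.pi ^ 2 * ‖ξ‖ ^ 2 : ℝ) : ℂ))) s :=
      (h0.ofReal_comp.const_mul Complex.I).cexp
    have := (h1.mul_const ((𝓕 f) ξ)).const_mul
      (Complex.exp ((↑(2 * Real.pi * inner ℝ ξ x) * Complex.I)))
    convert! this using 1
    ring

open scoped ContDiff

lemma dint {d : ℕ} {h h' : ℝ → Ed d → ℂ} {K : Set (Ed d)} (hK : IsCompact K) (t C : ℝ)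
    (hc : ∀ s, Continuous (h s)) (hc' : ∀ s, Continuous (h' s))
    (hd : ∀ s x, HasDerivAt (fun r => h r x) (h' s x) s)
    (h0 : ∀ s x, x ∉ K → h s x = 0) (h0' : ∀ s x, x ∉ K → h' s x = 0)
    (hC : ∀ s ∈ Set.Icc (t - 1) (t + 1), ∀ x ∈ K, ‖h' s x‖ ≤ C) :
    HasDerivAt (fun s => ∫ x, h s x) (∫ x, h' t x) t := by
  refine (hasDerivAt_integral_of_dominated_loc_of_deriv_le (μ := (volume : Measure (Ed d)))
    (F := h) (F' := h') (x₀ := t) (s := Set.Icc (t - 1) (t + 1))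
    (bound := K.indicator fun _ => C)
    (Icc_mem_nhds (by linarith) (by linarith)) ?_ ?_ ?_ ?_ ?_ ?_).2
  · exact Filter.Eventually.of_forall fun s => (hc s).aestronglyMeasurable
  · exact (hc t).integrable_of_hasCompactSupport (HasCompactSupport.intro hK (h0 t))
  · exact (hc' t).aestronglyMeasurable
  · refine Filter.Eventually.of_forall fun x s hs => ?_
    by_cases hx : x ∈ K
    · rw [Set.indicator_of_mem hx]; exact hC s hs x hx
    · rw [Set.indicator_of_notMem hx, h0' s x hx, norm_zero]
  · rw [integrable_indicator_iff hK.measurableSet]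
    exact integrableOn_const hK.measure_lt_top.ne
  · exact Filter.Eventually.of_forall fun x s _ => hd s x

lemma sol_fd {d : ℕ} {u : ℝ → SchwartzMap (Ed d) ℂ} (hu : IsLinSchrodSol d u) (t : ℝ) (x : Ed d) :
    HasDerivAt (fun s => u s x) (fderiv ℝ (fun p : ℝ × Ed d => u p.1 p.2) (t, x) (1, 0)) t := by
  have h1 : HasFDerivAt (fun p : ℝ × Ed d => u p.1 p.2)
      (fderiv ℝ (fun p : ℝ × Ed d => u p.1 p.2) (t, x)) (t, x) :=
    (hu.1.differentiable (by simp) (t, x)).hasFDerivAt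
  have h2 : HasDerivAt (fun s : ℝ => (s, x)) ((1 : ℝ), (0 : Ed d)) t :=
    (hasDerivAt_id t).prodMk (hasDerivAt_const t x)
  exact h1.comp_hasDerivAt t h2

lemma sol_lap {d : ℕ} {u : ℝ → SchwartzMap (Ed d) ℂ} (hu : IsLinSchrodSol d u) (t : ℝ) (x : Ed d) :
    fderiv ℝ (fun p : ℝ × Ed d => u p.1 p.2) (t, x) (1, 0) = Complex.I * (Δ (u t)) x := by
  rw [← lap_eq, ← hu.2 t x, (sol_fd hu t x).deriv]

lemma sol_hasDeriv {d : ℕ} {u : ℝ → SchwartzMap (Ed d) ℂ} (hu : IsLinSchrodSol d u)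
    (t : ℝ) (x : Ed d) : HasDerivAt (fun s => u s x) (Complex.I * (Δ (u t)) x) t := by
  rw [← sol_lap hu]; exact sol_fd hu t x

lemma sol_bound {d : ℕ} {u : ℝ → SchwartzMap (Ed d) ℂ} (hu : IsLinSchrodSol d u)
    {K : Set (Ed d)} (hK : IsCompact K) (t : ℝ) :
    ∃ C, ∀ s ∈ Set.Icc (t - 1) (t + 1), ∀ x ∈ K, ‖u s x‖ ≤ C ∧ ‖(Δ (u s)) x‖ ≤ C := by
  have hKK : IsCompact (Set.Icc (t - 1) (t + 1) ×ˢ K) := isCompact_Icc.prod hK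
  have c1 : Continuous (fun p : ℝ × Ed d => u p.1 p.2) := hu.1.continuous
  have c2 : Continuous (fun p : ℝ × Ed d =>
      fderiv ℝ (fun p : ℝ × Ed d => u p.1 p.2) p (1, 0)) :=
    (hu.1.continuous_fderiv (by simp)).clm_apply continuous_const
  obtain ⟨C1, h1⟩ := hKK.exists_bound_of_continuousOn c1.continuousOn
  obtain ⟨C2, h2⟩ := hKK.exists_bound_of_continuousOn c2.continuousOn
  refine ⟨max C1 C2, fun s hs x hx => ⟨(h1 (s, x) ⟨hs, hx⟩).trans (le_max_left _ _), ?_⟩⟩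
  have := h2 (s, x) ⟨hs, hx⟩
  rw [sol_lap hu] at this
  simp only [norm_mul, Complex.norm_I, one_mul] at this
  exact this.trans (le_max_right _ _)

lemma pd_contDiff {d : ℕ} {f : Ed d → ℂ} (hf : ContDiff ℝ ∞ f) (i : Fin d) :
    ContDiff ℝ ∞ (pd f i) := by
  unfold pd
  exact (hf.fderiv_right (m := ∞) (by simp)).clm_apply contDiff_const

lemma pd_hcs {d : ℕ} {f : Ed d → ℂ} (hf : HasCompactSupport f) (i : Fin d) :
    HasCompactSupport (pd f i) := by
  exact hf.fderiv_apply ℝ (stdBasis i)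

lemma pd_scale {d : ℕ} {f : Ed d → ℂ} (hf : ContDiff ℝ ∞ f) (c : ℝ) (i : Fin d) :
    pd (fun x => f (c • x)) i = fun x => (c : ℂ) * pd f i (c • x) := by
  ext x
  unfold pd
  have h1 : HasFDerivAt f (fderiv ℝ f (c • x)) (c • x) :=
    (hf.differentiable (by simp) _).hasFDerivAt
  have h2 : HasFDerivAt (fun x : Ed d => c • x) (c • ContinuousLinearMap.id ℝ (Ed d)) x :=
    (hasFDerivAt_id x).const_smul c
  have := (h1.comp x h2).fderiv
  simp only [Function.comp_def] at this
  rw [this]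
  simp

lemma pd_const_mul {d : ℕ} {f : Ed d → ℂ} (hf : ContDiff ℝ ∞ f) (c : ℂ) (i : Fin d) (x : Ed d) :
    pd (fun x => c * f x) i x = c * pd f i x := by
  unfold pd
  rw [fderiv_const_mul (hf.differentiable (by simp) _)]
  simp

lemma pd_mul {d : ℕ} {f g : Ed d → ℂ} (hf : ContDiff ℝ ∞ f) (hg : ContDiff ℝ ∞ g) (i : Fin d) :
    pd (fun x => f x * g x) i = fun x => pd f i x * g x + f x * pd g i x := by
  ext x
  unfold pd
  rw [fderiv_fun_mul (hf.differentiable (by simp) _) (hg.differentiable (by simp) _)]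
  simp
  ring

lemma lap_mul {d : ℕ} {f g : Ed d → ℂ} (hf : ContDiff ℝ ∞ f) (hg : ContDiff ℝ ∞ g) (x : Ed d) :
    lap (fun x => f x * g x) x = f x * lap g x +
      ∑ i, (2 * pd f i x * pd g i x + pd (pd f i) i x * g x) := by
  unfold lap
  rw [Finset.mul_sum, ← Finset.sum_add_distrib]
  refine Finset.sum_congr rfl fun i _ => ?_
  rw [pd_mul hf hg]
  have h1 := (pd_contDiff hf i).mul hg
  have h2 := hf.mul (pd_contDiff hg i)
  have : pd (fun x => pd f i x * g x + f x * pd g i x) i x =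
    pd (fun x => pd f i x * g x) i x + pd (fun x => f x * pd g i x) i x := by
    unfold pd at h1 h2 ⊢
    rw [fderiv_fun_add (h1.differentiable (by simp) _) (h2.differentiable (by simp) _)]
    rfl
  rw [this, pd_mul (pd_contDiff hf i) hg, pd_mul hf (pd_contDiff hg i)]
  ring

lemma cutoffs (d : ℕ) : ∃ (C : ℝ) (η : ℕ → Ed d → ℂ), 0 ≤ C ∧ (∀ n, ContDiff ℝ ∞ (η n)) ∧
    (∀ n, HasCompactSupport (η n)) ∧ (∀ n x, ‖η n x‖ ≤ 1) ∧
    (∀ x, Tendsto (fun n => η n x) atTop (nhds 1)) ∧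
    (∀ n i x, ‖pd (η n) i x‖ ≤ C / (n + 1)) ∧
    (∀ n i x, ‖pd (pd (η n) i) i x‖ ≤ C / (n + 1)) := by
  let χ : ContDiffBump (0 : Ed d) := ⟨1, 2, by norm_num, by norm_num⟩
  let f : Ed d → ℂ := fun x => ((χ x : ℝ) : ℂ)
  have hf : ContDiff ℝ ∞ f := Complex.ofRealCLM.contDiff.comp χ.contDiff
  have hcs : HasCompactSupport f := χ.hasCompactSupport.comp_left (g := Complex.ofReal) (by simp)
  have hb : ∀ i, ∃ C, ∀ x, ‖pd f i x‖ ≤ C ∧ ‖pd (pd f i) i x‖ ≤ C := by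
    intro i
    obtain ⟨C1, h1⟩ := (pd_hcs hcs i).exists_bound_of_continuous (pd_contDiff hf i).continuous
    obtain ⟨C2, h2⟩ := (pd_hcs (pd_hcs hcs i) i).exists_bound_of_continuous
      (pd_contDiff (pd_contDiff hf i) i).continuous
    exact ⟨max C1 C2, fun x => ⟨(h1 x).trans (le_max_left _ _), (h2 x).trans (le_max_right _ _)⟩⟩
  choose Ci hCi using hb
  have hCi0 : ∀ i, 0 ≤ Ci i := fun i => (norm_nonneg _).trans (hCi i 0).1
  have hCs : ∀ i, Ci i ≤ ∑ i, Ci i :=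
    fun i => Finset.single_le_sum (fun i _ => hCi0 i) (Finset.mem_univ i)
  let c : ℕ → ℝ := fun n => 1 / ((n : ℝ) + 1)
  have hc0 : ∀ n, 0 < c n := fun n => by positivity
  have hc1 : ∀ n, c n ≤ 1 := fun n => by
    simp only [c]; rw [div_le_one (by positivity)]; linarith [Nat.cast_nonneg (α := ℝ) n]
  have hsm : ∀ n, ContDiff ℝ ∞ (fun x : Ed d => f (c n • x)) :=
    fun n => hf.comp (contDiff_const_smul (c n))
  refine ⟨∑ i, Ci i, fun n x => f (c n • x), Finset.sum_nonneg fun i _ => hCi0 i, hsm, ?_, ?_, ?_,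
    ?_, ?_⟩
  · intro n
    exact hcs.comp_homeomorph (Homeomorph.smulOfNeZero (c n) (hc0 n).ne')
  · intro n x
    simp only [f, Complex.norm_real, Real.norm_eq_abs, abs_of_nonneg χ.nonneg]
    exact χ.le_one
  · intro x
    have h1 : Tendsto (fun n => c n • x) atTop (nhds ((0 : ℝ) • x)) :=
      tendsto_one_div_add_atTop_nhds_zero_nat.smul_const x
    rw [zero_smul] at h1
    have h2 := (hf.continuous.tendsto 0).comp h1
    have : f 0 = 1 := by
      simp only [f]
      rw [χ.one_of_mem_closedBall (by simp [χ])]; simp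
    rwa [this] at h2
  · intro n i x
    rw [pd_scale hf, norm_mul, Complex.norm_real, Real.norm_eq_abs, abs_of_pos (hc0 n)]
    calc c n * ‖pd f i (c n • x)‖ ≤ c n * ∑ i, Ci i := by
          have := hc0 n
          gcongr
          exact ((hCi i _).1).trans (hCs i)
      _ = _ := by simp only [c]; ring
  · intro n i x
    rw [pd_scale hf, pd_const_mul (f := fun x => pd f i (c n • x))
      ((pd_contDiff hf i).comp (contDiff_const_smul (c n))),
      pd_scale (pd_contDiff hf i), norm_mul, norm_mul, Complex.norm_real, Real.norm_eq_abs,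
      abs_of_pos (hc0 n)]
    calc c n * (c n * ‖pd (pd f i) i (c n • x)‖) ≤ c n * (1 * ∑ i, Ci i) := by
          have := hc0 n
          have := hc1 n
          gcongr
          exact ((hCi i _).2).trans (hCs i)
      _ = _ := by simp only [c]; ring

lemma sq_int {d : ℕ} (f : 𝓢(Ed d, ℂ)) : Integrable (fun x => ‖f x‖ ^ 2) := by
  have := (f.memLp 2 volume).integrable_norm_pow (by norm_num)
  simpa using this

lemma int2 {d : ℕ} (f g : 𝓢(Ed d, ℂ)) : Integrable (fun x => ‖f x‖ ^ 2 + ‖g x‖ ^ 2) :=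
  (sq_int f).add (sq_int g)

lemma int3 {d : ℕ} (f g h : 𝓢(Ed d, ℂ)) :
    Integrable (fun x => ‖f x‖ ^ 2 + ‖g x‖ ^ 2 + 2 * ‖h x‖ ^ 2) :=
  (int2 f g).add ((sq_int h).const_mul 2)

lemma mul_int {d : ℕ} (f g : 𝓢(Ed d, ℂ)) : Integrable (fun x => f x * g x) := by
  exact (f.memLp 2 volume).integrable_mul (g.memLp 2 volume)

lemma pairing_deriv {d : ℕ} {u : ℝ → SchwartzMap (Ed d) ℂ} (hu : IsLinSchrodSol d u)
    (f : 𝓢(Ed d, ℂ)) (b : ℝ) {η : Ed d → ℂ} (hη : ContDiff ℝ ∞ η) (hcs : HasCompactSupport η)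
    (t : ℝ) :
    HasDerivAt (fun s => ∫ x, η x * propa (s - b) f x * u s x)
      (Complex.I * ∫ x, (∑ i, (2 * pd η i x * pd (propa (t - b) f) i x +
        pd (pd η i) i x * propa (t - b) f x)) * u t x) t := by
  obtain ⟨C1, hC1⟩ := propa_bound f
  obtain ⟨C2, hC2⟩ := propa_bound (Δ f)
  obtain ⟨C3, hC3⟩ := sol_bound hu hcs t
  have hη1 : Continuous η := hη.continuous
  obtain ⟨C0, hC0⟩ := hcs.exists_bound_of_continuous hη1
  have hC00 : 0 ≤ C0 := (norm_nonneg _).trans (hC0 0)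
  have hC10 : 0 ≤ C1 := (norm_nonneg _).trans (hC1 0 0)
  have hC20 : 0 ≤ C2 := (norm_nonneg _).trans (hC2 0 0)
  have key := dint (d := d) (K := tsupport η) hcs t (C0 * C2 * C3 + C0 * C1 * C3)
    (h := fun s x => η x * propa (s - b) f x * u s x)
    (h' := fun s x => η x * (-Complex.I * (Δ (propa (s - b) f)) x) * u s x +
      η x * propa (s - b) f x * (Complex.I * (Δ (u s)) x)) ?_ ?_ ?_ ?_ ?_ ?_
  · convert! key using 1
    have hηT : η.HasTemperateGrowth := hcs.hasTemperateGrowth hη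
    have hW : ContDiff ℝ ∞ (propa (t - b) f) := (propa (t - b) f).smooth ⊤
    set W := propa (t - b) f with hWdef
    let G : 𝓢(Ed d, ℂ) := SchwartzMap.smulLeftCLM ℂ η W
    have hG : (G : Ed d → ℂ) = fun x => η x * W x := by
      ext x
      simp only [G, SchwartzMap.smulLeftCLM_apply_apply hηT, smul_eq_mul]
    have ibp := SchwartzMap.integral_mul_laplacian_right_eq_left (μ := volume) G (u t)
    have e1 : ∀ x, (Δ G) x = η x * (Δ W) x +
      ∑ i, (2 * pd η i x * pd W i x + pd (pd η i) i x * W x) := by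
      intro x
      rw [← lap_eq, hG, lap_mul hη hW, lap_eq]
    let H : 𝓢(Ed d, ℂ) := SchwartzMap.smulLeftCLM ℂ η (Δ W)
    have hH : ∀ x, H x = η x * (Δ W) x := by
      intro x
      simp only [H, SchwartzMap.smulLeftCLM_apply_apply hηT, smul_eq_mul]
    have e2 : ∀ x, (∑ i, (2 * pd η i x * pd W i x + pd (pd η i) i x * W x)) * u t x =
        (Δ G) x * u t x - H x * u t x := by
      intro x
      rw [e1, hH]; ring
    simp_rw [e2]
    rw [integral_sub (mul_int _ _) (mul_int _ _), ← ibp, ← integral_sub (mul_int _ _) (mul_int _ _),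
      ← integral_const_mul]
    congr 1
    ext x
    rw [hH, hG]
    ring
  · intro s
    have := (propa (s - b) f).continuous
    have := (u s).continuous
    fun_prop
  · intro s
    have := (propa (s - b) f).continuous
    have := (Δ (propa (s - b) f)).continuous
    have := (u s).continuous
    have := (Δ (u s)).continuous
    fun_prop
  · intro s x
    have h1 := (propa_hasDeriv (s - b) f x).comp_sub_const s b
    exact (h1.const_mul (η x)).mul (sol_hasDeriv hu s x)
  · intro s x hx
    simp [image_eq_zero_of_notMem_tsupport hx]
  · intro s x hx
    simp [image_eq_zero_of_notMem_tsupport hx]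
  · intro s hs x hx
    have a1 := hC0 x
    have a2 := hC1 (s - b) x
    have a3 := hC2 (s - b) x
    have a4 := hC3 s hs x hx
    have hC30 : 0 ≤ C3 := (norm_nonneg _).trans a4.1
    refine (norm_add_le _ _).trans ?_
    simp only [norm_mul, norm_neg, Complex.norm_I, one_mul, propa_lap]
    gcongr
    · exact a4.1
    · exact a4.2

lemma pairing_const {d : ℕ} {u : ℝ → SchwartzMap (Ed d) ℂ} (hu : IsLinSchrodSol d u)
    (f : 𝓢(Ed d, ℂ)) (c a b M : ℝ) (hab : a ≤ b)
    (hM : ∀ t ∈ Set.Icc a b, ∫ x, ‖u t x‖ ^ 2 ≤ M) :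
    ∫ x, propa (a - c) f x * u a x = ∫ x, propa (b - c) f x * u b x := by
  obtain ⟨C, η, hC0, hη, hcs, hη1, hlim, hp1, hp2⟩ := cutoffs d
  have hL : ∀ t, Tendsto (fun n => ∫ x, η n x * propa (t - c) f x * u t x) atTop
      (nhds (∫ x, propa (t - c) f x * u t x)) := by
    intro t
    apply tendsto_integral_of_dominated_convergence (fun x => ‖propa (t - c) f x * u t x‖)
    · intro n
      have := (propa (t - c) f).continuous
      have := (u t).continuous
      have := (hη n).continuous
      exact Continuous.aestronglyMeasurable (by fun_prop)
    · exact (mul_int _ _).norm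
    · intro n
      refine Filter.Eventually.of_forall fun x => ?_
      rw [mul_assoc, norm_mul]
      exact mul_le_of_le_one_left (norm_nonneg _) (hη1 n x)
    · refine Filter.Eventually.of_forall fun x => ?_
      have := ((hlim x).mul_const (propa (t - c) f x)).mul_const (u t x)
      simpa using this
  set Q : ℝ := ∑ i : Fin d, ((∫ x, ‖(∂_{stdBasis i} f) x‖ ^ 2) + (∫ x, ‖f x‖ ^ 2) + 2 * M) with hQ
  have hest : ∀ n : ℕ, ‖(∫ x, η n x * propa (b - c) f x * u b x) -
      ∫ x, η n x * propa (a - c) f x * u a x‖ ≤ C / (n + 1) * Q * (b - a) := by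
    intro n
    refine norm_image_sub_le_of_norm_deriv_le_segment' (a := a) (b := b)
      (f := fun s => ∫ x, η n x * propa (s - c) f x * u s x)
      (fun t _ => (pairing_deriv hu f c (hη n) (hcs n) t).hasDerivWithinAt) ?_ b ⟨hab, le_refl _⟩
    intro t ht
    rw [norm_mul, Complex.norm_I, one_mul]
    set W := propa (t - c) f with hW
    have hintg : Integrable (fun x => C / (n + 1) * ∑ i : Fin d, (‖(∂_{stdBasis i} W) x‖ ^ 2 +
      ‖W x‖ ^ 2 + 2 * ‖u t x‖ ^ 2)) := by
      refine Integrable.const_mul (integrable_finsetSum _ fun i _ => ?_) _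
      exact ((sq_int _).add (sq_int _)).add ((sq_int _).const_mul 2)
    refine (norm_integral_le_of_norm_le hintg (Filter.Eventually.of_forall fun x => ?_)).trans ?_
    · rw [norm_mul, Finset.mul_sum]
      refine (mul_le_mul_of_nonneg_right (norm_sum_le _ _) (norm_nonneg _)).trans ?_
      rw [Finset.sum_mul]
      refine Finset.sum_le_sum fun i _ => ?_
      rw [pd_eq W i]
      set w := (∂_{stdBasis i} W) x
      have h1 := hp1 n i x
      have h2 := hp2 n i x
      set e := C / ((n : ℝ) + 1)
      have he : 0 ≤ e := (norm_nonneg _).trans h1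
      calc ‖2 * pd (η n) i x * w + pd (pd (η n) i) i x * W x‖ * ‖u t x‖
          ≤ (2 * e * ‖w‖ + e * ‖W x‖) * ‖u t x‖ := by
            gcongr
            refine (norm_add_le _ _).trans ?_
            simp only [norm_mul, Complex.norm_ofNat]
            gcongr
        _ = e * (2 * ‖w‖ * ‖u t x‖ + ‖W x‖ * ‖u t x‖) := by ring
        _ ≤ _ := by
            refine mul_le_mul_of_nonneg_left ?_ he
            nlinarith [sq_nonneg (‖w‖ - ‖u t x‖), sq_nonneg (‖W x‖ - ‖u t x‖), sq_nonneg (‖W x‖),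
              sq_nonneg ‖u t x‖]
    · rw [integral_const_mul]
      have hCn : 0 ≤ C / ((n : ℝ) + 1) := by positivity
      refine mul_le_mul_of_nonneg_left ?_ hCn
      rw [integral_finsetSum _ fun i _ => int3 _ _ _, hQ]
      refine Finset.sum_le_sum fun i _ => ?_
      rw [integral_add (int2 _ _) ((sq_int _).const_mul 2), integral_add (sq_int _) (sq_int _), integral_const_mul, hW, propa_lineDeriv, propa_norm,
        propa_norm]
      gcongr
      exact hM t ⟨ht.1, ht.2.le⟩
  have hz : Tendsto (fun n : ℕ => C / ((n : ℝ) + 1) * Q * (b - a)) atTop (nhds 0) := by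
    have := ((tendsto_one_div_add_atTop_nhds_zero_nat (𝕜 := ℝ)).const_mul (C)).mul_const
      (Q * (b - a))
    rw [mul_zero, zero_mul] at this
    refine this.congr fun n => ?_
    ring
  have hfin := le_of_tendsto_of_tendsto ((hL b).sub (hL a)).norm hz
    (Filter.Eventually.of_forall hest)
  exact (sub_eq_zero.mp (norm_le_zero_iff.mp hfin)).symm

/-- Complex conjugate of a Schwartz function. -/
def cj {d : ℕ} (f : 𝓢(Ed d, ℂ)) : 𝓢(Ed d, ℂ) :=
  SchwartzMap.postcompCLM (𝕜 := ℝ) (Complex.conjCLE : ℂ →L[ℝ] ℂ) f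

lemma cj_apply {d : ℕ} (f : 𝓢(Ed d, ℂ)) (x : Ed d) : cj f x = starRingEnd ℂ (f x) := rfl

lemma pd_conj_norm {d : ℕ} (f : Ed d → ℂ) (i : Fin d) (x : Ed d) :
    ‖pd (fun x => starRingEnd ℂ (f x)) i x‖ = ‖pd f i x‖ := by
  have := Complex.conjCLE.comp_fderiv (f := f) (x := x)
  have h2 : fderiv ℝ (fun x => starRingEnd ℂ (f x)) x = _ := this
  unfold pd
  rw [h2]
  simp

lemma pair_eq {d : ℕ} {u : ℝ → SchwartzMap (Ed d) ℂ} (hu : IsLinSchrodSol d u) (a b M : ℝ)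
    (hM : ∀ t ∈ Set.uIcc a b, ∫ x, ‖u t x‖ ^ 2 ≤ M) :
    ∫ x, propa (a - b) (cj (u b)) x * u a x = ((∫ x, ‖u b x‖ ^ 2 : ℝ) : ℂ) := by
  have h1 : ∫ x, propa (a - b) (cj (u b)) x * u a x =
      ∫ x, propa (b - b) (cj (u b)) x * u b x := by
    rcases le_total a b with h | h
    · rw [Set.uIcc_of_le h] at hM
      exact pairing_const hu (cj (u b)) b a b M h hM
    · rw [Set.uIcc_of_ge h] at hM
      exact (pairing_const hu (cj (u b)) b b a M h hM).symm
  rw [h1, sub_self, propa_zero, ← integral_complex_ofReal]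
  congr 1
  ext x
  rw [cj_apply, Complex.conj_mul']
  simp

lemma mass_le {d : ℕ} {u : ℝ → SchwartzMap (Ed d) ℂ} (hu : IsLinSchrodSol d u) (a b M : ℝ)
    (hM : ∀ t ∈ Set.uIcc a b, ∫ x, ‖u t x‖ ^ 2 ≤ M) :
    ∫ x, ‖u b x‖ ^ 2 ≤ ∫ x, ‖u a x‖ ^ 2 := by
  have h1 := pair_eq hu a b M hM
  set P := propa (a - b) (cj (u b)) with hP
  have hPn : ∫ x, ‖P x‖ ^ 2 = ∫ x, ‖u b x‖ ^ 2 := by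
    rw [hP, propa_norm]
    simp [cj_apply]
  have h2 : ‖∫ x, P x * u a x‖ ≤ ∫ x, (1 / 2) * (‖P x‖ ^ 2 + ‖u a x‖ ^ 2) := by
    refine norm_integral_le_of_norm_le ((int2 _ _).const_mul _)
      (Filter.Eventually.of_forall fun x => ?_)
    rw [norm_mul]
    nlinarith [sq_nonneg (‖P x‖ - ‖u a x‖)]
  rw [integral_const_mul, integral_add (sq_int _) (sq_int _), hPn, h1, Complex.norm_real] at h2
  have := (Real.le_norm_self _).trans h2
  linarith

lemma mass_closed {d : ℕ} {u : ℝ → SchwartzMap (Ed d) ℂ} (hu : IsLinSchrodSol d u) (n : ℕ) :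
    IsClosed {t : ℝ | ∫ x, ‖u t x‖ ^ 2 ≤ n} := by
  have hiff : ∀ t, (∫ x, ‖u t x‖ ^ 2 ≤ n) ↔
      ∫⁻ x, ENNReal.ofReal (‖u t x‖ ^ 2) ≤ ENNReal.ofReal n := by
    intro t
    rw [← ofReal_integral_eq_lintegral_ofReal (sq_int (u t))
      (Filter.Eventually.of_forall fun x => by positivity),
      ENNReal.ofReal_le_ofReal_iff (Nat.cast_nonneg n)]
  rw [← isSeqClosed_iff_isClosed]
  intro ts t hts hlim
  have hts' : ∀ k, ∫⁻ x, ENNReal.ofReal (‖u (ts k) x‖ ^ 2) ≤ ENNReal.ofReal n :=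
    fun k => (hiff _).1 (hts k)
  refine (hiff t).2 ?_
  have hpt : ∀ x, Tendsto (fun k => ENNReal.ofReal (‖u (ts k) x‖ ^ 2)) atTop
      (nhds (ENNReal.ofReal (‖u t x‖ ^ 2))) := by
    intro x
    have c1 : Continuous (fun s : ℝ => u s x) :=
      hu.1.continuous.comp (continuous_id.prodMk continuous_const)
    exact (ENNReal.continuous_ofReal.comp (c1.norm.pow 2)).tendsto t |>.comp hlim
  calc ∫⁻ x, ENNReal.ofReal (‖u t x‖ ^ 2)
      = ∫⁻ x, liminf (fun k => ENNReal.ofReal (‖u (ts k) x‖ ^ 2)) atTop := by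
        congr 1; ext x; exact (hpt x).liminf_eq.symm
    _ ≤ liminf (fun k => ∫⁻ x, ENNReal.ofReal (‖u (ts k) x‖ ^ 2)) atTop := by
        apply lintegral_liminf_le
        intro k
        have := (u (ts k)).continuous
        exact (ENNReal.continuous_ofReal.comp (this.norm.pow 2)).measurable
    _ ≤ ENNReal.ofReal n := by
        refine (liminf_le_liminf (v := fun _ => ENNReal.ofReal n)
          (Filter.Eventually.of_forall hts')).trans ?_
        simp

lemma mass_bdd {d : ℕ} {u : ℝ → SchwartzMap (Ed d) ℂ} (hu : IsLinSchrodSol d u) (a b : ℝ) :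
    ∃ M, ∀ t ∈ Set.uIcc a b, ∫ x, ‖u t x‖ ^ 2 ≤ M := by
  refine baire_const (fun t => ∫ x, ‖u t x‖ ^ 2) (mass_closed hu) ?_ _ _
  intro a b M hab hM
  rw [← Set.uIcc_of_le hab] at hM
  refine le_antisymm (mass_le hu b a M ?_) (mass_le hu a b M hM)
  rwa [Set.uIcc_comm]

lemma sol_eq {d : ℕ} {u : ℝ → SchwartzMap (Ed d) ℂ} (hu : IsLinSchrodSol d u) (a b : ℝ) :
    u a = cj (propa (a - b) (cj (u b))) := by
  obtain ⟨M, hM⟩ := mass_bdd hu a b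
  have h1 := pair_eq hu a b M hM
  have hm : ∫ x, ‖u a x‖ ^ 2 = ∫ x, ‖u b x‖ ^ 2 := by
    refine le_antisymm (mass_le hu b a M ?_) (mass_le hu a b M hM)
    rwa [Set.uIcc_comm]
  set P := propa (a - b) (cj (u b)) with hP
  have hPn : ∫ x, ‖P x‖ ^ 2 = ∫ x, ‖u b x‖ ^ 2 := by
    rw [hP, propa_norm]
    simp [cj_apply]
  have hpt : ∀ x, ‖(u a - cj P) x‖ ^ 2 = ‖u a x‖ ^ 2 + ‖P x‖ ^ 2 - 2 * (P x * u a x).re := by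
    intro x
    rw [sub_apply, cj_apply, ← Complex.normSq_eq_norm_sq, ← Complex.normSq_eq_norm_sq,
      ← Complex.normSq_eq_norm_sq]
    simp only [Complex.normSq_apply, Complex.sub_re, Complex.sub_im, Complex.conj_re,
      Complex.conj_im, Complex.mul_re]
    ring
  have hre : ∫ x, (P x * u a x).re = ∫ x, ‖u b x‖ ^ 2 := by
    have := congrArg Complex.re h1
    rw [Complex.ofReal_re] at this
    rw [← this]
    exact integral_re (mul_int P (u a))
  have hzero : ∫ x, ‖(u a - cj P) x‖ ^ 2 = 0 := by
    simp_rw [hpt]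
    have hri : Integrable (fun x => 2 * (P x * u a x).re) := (mul_int P (u a)).re.const_mul 2
    rw [integral_sub (int2 _ _) hri,
      integral_add (sq_int _) (sq_int _), integral_const_mul, hm, hPn, hre]
    ring
  have hae := (integral_eq_zero_iff_of_nonneg (fun x => by positivity) (sq_int (u a - cj P))).1 hzero
  have hc : Continuous (fun x => ‖(u a - cj P) x‖ ^ 2) := (u a - cj P).continuous.norm.pow 2
  have hfun := Continuous.ae_eq_iff_eq (volume : Measure (Ed d)) hc continuous_const |>.1 hae
  ext x
  have h0 : ‖(u a - cj P) x‖ ^ 2 = 0 := congrFun hfun x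
  have h1 := norm_eq_zero.mp ((pow_eq_zero_iff two_ne_zero).mp h0)
  rw [sub_apply] at h1
  exact sub_eq_zero.mp h1

lemma grad_int {d : ℕ} (f : 𝓢(Ed d, ℂ)) : Integrable (fun x => gradNormSq f x) := by
  unfold gradNormSq
  refine integrable_finsetSum _ fun i _ => ?_
  rw [pd_eq]
  exact sq_int _

lemma grad_const {d : ℕ} {u : ℝ → SchwartzMap (Ed d) ℂ} (hu : IsLinSchrodSol d u) (a b : ℝ) :
    ∫ x, gradNormSq (u a) x = ∫ x, gradNormSq (u b) x := by
  have h := sol_eq hu a b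
  have h1 : ∀ f : 𝓢(Ed d, ℂ), ∫ x, gradNormSq f x = ∑ i : Fin d, ∫ x, ‖(∂_{stdBasis i} f : 𝓢(Ed d, ℂ)) x‖ ^ 2 := by
    intro f
    unfold gradNormSq
    simp_rw [pd_eq]
    rw [integral_finsetSum _ fun i _ => sq_int _]
  have h2 : ∀ f : 𝓢(Ed d, ℂ), ∫ x, gradNormSq (cj f) x = ∫ x, gradNormSq f x := by
    intro f
    unfold gradNormSq
    congr 1
    ext x
    refine Finset.sum_congr rfl fun i _ => ?_
    rw [← pd_conj_norm f i x]
    rfl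
  rw [h, h2, h1]
  simp_rw [propa_lineDeriv, propa_norm]
  rw [← h1, h2]

lemma cs_int {d : ℕ} {f g : Ed d → ℝ} (hf : Continuous f) (hg : Continuous g)
    (hf2 : Integrable (fun x => f x ^ 2)) (hg2 : Integrable (fun x => g x ^ 2)) :
    Integrable (fun x => f x * g x) := by
  have a := (memLp_two_iff_integrable_sq hf.aestronglyMeasurable).2 hf2
  have b := (memLp_two_iff_integrable_sq hg.aestronglyMeasurable).2 hg2
  exact a.integrable_mul b

lemma cs_le {d : ℕ} {f g : Ed d → ℝ} (hf : Continuous f) (hg : Continuous g)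
    (hf0 : ∀ x, 0 ≤ f x) (hg0 : ∀ x, 0 ≤ g x)
    (hf2 : Integrable (fun x => f x ^ 2)) (hg2 : Integrable (fun x => g x ^ 2)) :
    ∫ x, f x * g x ≤ √(∫ x, f x ^ 2) * √(∫ x, g x ^ 2) := by
  have a := (memLp_two_iff_integrable_sq hf.aestronglyMeasurable).2 hf2
  have b := (memLp_two_iff_integrable_sq hg.aestronglyMeasurable).2 hg2
  have h := integral_mul_le_Lp_mul_Lq_of_nonneg (μ := (volume : Measure (Ed d))) (p := 2) (q := 2)
    Real.HolderConjugate.two_two (f := f) (g := g) (Filter.Eventually.of_forall hf0)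
    (Filter.Eventually.of_forall hg0) (by simpa using a) (by simpa using b)
  simpa [Real.sqrt_eq_rpow] using h

lemma mink {d : ℕ} {f g : Ed d → ℝ} (hf : Continuous f) (hg : Continuous g)
    (hf0 : ∀ x, 0 ≤ f x) (hg0 : ∀ x, 0 ≤ g x)
    (hf2 : Integrable (fun x => f x ^ 2)) (hg2 : Integrable (fun x => g x ^ 2)) :
    √(∫ x, (f x + g x) ^ 2) ≤ √(∫ x, f x ^ 2) + √(∫ x, g x ^ 2) := by
  have h1 := cs_le hf hg hf0 hg0 hf2 hg2
  have h2 := cs_int hf hg hf2 hg2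
  have e : ∫ x, (f x + g x) ^ 2 = (∫ x, f x ^ 2) + (∫ x, g x ^ 2) + 2 * ∫ x, f x * g x := by
    rw [← integral_const_mul, ← integral_add hf2 hg2,
      ← integral_add (f := fun x => f x ^ 2 + g x ^ 2) (hf2.add hg2) (h2.const_mul 2)]
    congr 1
    ext x
    ring
  have p1 : 0 ≤ ∫ x, f x ^ 2 := integral_nonneg fun x => sq_nonneg _
  have p2 : 0 ≤ ∫ x, g x ^ 2 := integral_nonneg fun x => sq_nonneg _
  rw [Real.sqrt_le_left (by positivity), e, add_sq, Real.sq_sqrt p1, Real.sq_sqrt p2]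
  linarith

lemma pd_ofReal {d : ℕ} {η : Ed d → ℝ} (hη : ContDiff ℝ ∞ η) (i : Fin d) (x : Ed d) :
    pd (fun x => ((η x : ℝ) : ℂ)) i x = ((fderiv ℝ η x (stdBasis i) : ℝ) : ℂ) := by
  have h1 : HasFDerivAt η (fderiv ℝ η x) x := (hη.differentiable (by simp) _).hasFDerivAt
  have := (Complex.ofRealCLM.hasFDerivAt.comp x h1).fderiv
  unfold pd
  have h2 : fderiv ℝ (fun x => ((η x : ℝ) : ℂ)) x = _ := this
  rw [h2]
  simp

lemma grad_bound {d : ℕ} {η : Ed d → ℝ} {L : ℝ} {x : Ed d}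
    (hL : ‖fderiv ℝ η x‖ ≤ L) : ∑ i, (fderiv ℝ η x (stdBasis i)) ^ 2 ≤ L ^ 2 := by
  set T := fderiv ℝ η x
  set S := ∑ i, (T (stdBasis i)) ^ 2 with hS
  have hS0 : 0 ≤ S := Finset.sum_nonneg fun i _ => sq_nonneg _
  have hL0 : 0 ≤ L := (norm_nonneg _).trans hL
  let v : Ed d := ∑ i, T (stdBasis i) • stdBasis i
  have hv : T v = S := by
    simp only [v, map_sum, map_smul, smul_eq_mul, hS, sq]
  have hvc : ∀ i, v i = T (stdBasis i) := by
    intro i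
    simp [v, stdBasis, Finset.sum_apply, Pi.single_apply]
  have hvn : ‖v‖ ^ 2 = S := by
    rw [EuclideanSpace.norm_sq_eq]
    simp [hvc, hS]
  have h1 : S ≤ L * ‖v‖ := by
    rw [← hv]
    exact (Real.le_norm_self _).trans ((T.le_opNorm v).trans (by gcongr))
  rw [← hvn] at h1 ⊢
  have h2 := norm_nonneg v
  rcases h2.eq_or_lt with h | h
  · rw [← h]; nlinarith
  · have : ‖v‖ ≤ L := by
      by_contra hc
      push Not at hc
      nlinarith
    gcongr

lemma grad_cs {d : ℕ} {η : Ed d → ℝ} {L : ℝ} (hL : ∀ x, ‖fderiv ℝ η x‖ ≤ L) (f : Ed d → ℂ)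
    (x : Ed d) :
    ‖∑ i, ((fderiv ℝ η x (stdBasis i) : ℝ) : ℂ) * pd f i x‖ ≤ L * √(gradNormSq f x) := by
  have hL0 : 0 ≤ L := (norm_nonneg _).trans (hL x)
  refine (norm_sum_le _ _).trans ?_
  simp_rw [norm_mul, Complex.norm_real]
  refine (Real.sum_mul_le_sqrt_mul_sqrt _ _ _).trans ?_
  refine mul_le_mul_of_nonneg_right ?_ (Real.sqrt_nonneg _)
  refine (Real.sqrt_le_left hL0).2 ?_
  simpa using grad_bound (hL x)

lemma grad_cont {d : ℕ} (f : 𝓢(Ed d, ℂ)) : Continuous (fun x => gradNormSq f x) := by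
  unfold gradNormSq
  refine continuous_finsetSum _ fun i _ => ?_
  rw [pd_eq]
  exact (∂_{stdBasis i} f : 𝓢(Ed d, ℂ)).continuous.norm.pow 2

lemma grad_nonneg {d : ℕ} (f : Ed d → ℂ) (x : Ed d) : 0 ≤ gradNormSq f x :=
  Finset.sum_nonneg fun i _ => sq_nonneg _

lemma flux_bound {d : ℕ} (f : 𝓢(Ed d, ℂ)) {η : Ed d → ℝ} (hη : ContDiff ℝ ∞ η)
    (hcs : HasCompactSupport η) {L : ℝ} (hL : ∀ x, ‖fderiv ℝ η x‖ ≤ L) :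
    |(Complex.I * ∫ x, ((η x : ℝ) : ℂ) ^ 2 * starRingEnd ℂ (f x) * (Δ f) x).re| ≤
      2 * L * √(∫ x, (|η x| * ‖f x‖) ^ 2) * √(∫ x, gradNormSq f x) := by
  let q : Ed d → ℂ := fun x => ((η x : ℝ) : ℂ) * ((η x : ℝ) : ℂ)
  have hηc : ContDiff ℝ ∞ (fun x => ((η x : ℝ) : ℂ)) := Complex.ofRealCLM.contDiff.comp hη
  have hηs : HasCompactSupport (fun x => ((η x : ℝ) : ℂ)) :=
    hcs.comp_left (g := Complex.ofReal) (by simp)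
  have hq : ContDiff ℝ ∞ q := hηc.mul hηc
  have hqs : HasCompactSupport q := hηs.mul_left
  have hqT : q.HasTemperateGrowth := hqs.hasTemperateGrowth hq
  have hL0 : 0 ≤ L := (norm_nonneg _).trans (hL 0)
  let G : 𝓢(Ed d, ℂ) := SchwartzMap.smulLeftCLM ℂ q (cj f)
  have hG : (G : Ed d → ℂ) = fun x => q x * cj f x := by
    ext x
    simp only [G, SchwartzMap.smulLeftCLM_apply_apply hqT, smul_eq_mul]
  have hcjpd : ∀ i x, pd (cj f) i x = starRingEnd ℂ (pd f i x) := by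
    intro i x
    have h2 : fderiv ℝ (fun x => starRingEnd ℂ (f x)) x = _ :=
      Complex.conjCLE.comp_fderiv (f := f) (x := x)
    change fderiv ℝ (fun x => starRingEnd ℂ (f x)) x (stdBasis i) = _
    rw [h2]
    rfl
  have hpdG : ∀ i x, (∂_{stdBasis i} G : 𝓢(Ed d, ℂ)) x =
      2 * ((η x : ℝ) : ℂ) * ((fderiv ℝ η x (stdBasis i) : ℝ) : ℂ) * starRingEnd ℂ (f x) +
        ((η x : ℝ) : ℂ) ^ 2 * starRingEnd ℂ (pd f i x) := by
    intro i x
    rw [← pd_eq, hG, pd_mul hq ((cj f).smooth ⊤)]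
    simp only [q]
    rw [pd_mul hηc hηc]
    beta_reduce
    rw [pd_ofReal hη, hcjpd, cj_apply]
    ring
  let S : Ed d → ℂ := fun x => ∑ i : Fin d, (∂_{stdBasis i} G : 𝓢(Ed d, ℂ)) x *
    (∂_{stdBasis i} f : 𝓢(Ed d, ℂ)) x
  have hSi : Integrable S := integrable_finsetSum _ fun i _ => mul_int _ _
  have hibp : ∫ x, ((η x : ℝ) : ℂ) ^ 2 * starRingEnd ℂ (f x) * (Δ f) x = - ∫ x, S x := by
    have e1 : ∀ x, ((η x : ℝ) : ℂ) ^ 2 * starRingEnd ℂ (f x) * (Δ f) x =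
        ∑ i : Fin d, G x * (∂_{stdBasis i} (∂_{stdBasis i} f) : 𝓢(Ed d, ℂ)) x := by
      intro x
      rw [← Finset.mul_sum, ← lap_eq, hG]
      simp only [q, cj_apply, sq]
      rfl
    simp_rw [e1]
    rw [integral_finsetSum _ fun i _ => mul_int _ _]
    simp only [S]
    rw [integral_finsetSum _ fun i _ => mul_int _ _, ← Finset.sum_neg_distrib]
    refine Finset.sum_congr rfl fun i _ => ?_
    exact SchwartzMap.integral_mul_lineDerivOp_right_eq_neg_left G _ _
  have hSim : ∀ x, |(S x).im| ≤ 2 * L * ((|η x| * ‖f x‖) * √(gradNormSq f x)) := by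
    intro x
    have e : S x = 2 * ((η x : ℝ) : ℂ) * starRingEnd ℂ (f x) *
        (∑ i, ((fderiv ℝ η x (stdBasis i) : ℝ) : ℂ) * pd f i x) +
        ((η x ^ 2 * gradNormSq f x : ℝ) : ℂ) := by
      simp only [S, hpdG, gradNormSq]
      push_cast
      rw [Finset.mul_sum, Finset.mul_sum, ← Finset.sum_add_distrib]
      refine Finset.sum_congr rfl fun i _ => ?_
      rw [← pd_eq, ← Complex.conj_mul']
      ring
    rw [e, Complex.add_im, Complex.ofReal_im, add_zero]
    refine (Complex.abs_im_le_norm _).trans ?_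
    rw [norm_mul, norm_mul, norm_mul, Complex.norm_real, RCLike.norm_conj, Complex.norm_ofNat,
      Real.norm_eq_abs]
    have := grad_cs hL f x
    calc _ ≤ 2 * |η x| * ‖f x‖ * (L * √(gradNormSq f x)) := by gcongr
      _ = _ := by ring
  have c1 : Continuous (fun x => |η x| * ‖f x‖) := by
    have := hη.continuous
    have := f.continuous
    fun_prop
  have c2 : Continuous (fun x => √(gradNormSq f x)) := (grad_cont f).sqrt
  have i1 : Integrable (fun x => (|η x| * ‖f x‖) ^ 2) := by
    refine (c1.pow 2).integrable_of_hasCompactSupport ?_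
    refine HasCompactSupport.intro hcs fun x hx => ?_
    simp [image_eq_zero_of_notMem_tsupport hx]
  have sqg : ∀ x, √(gradNormSq f x) ^ 2 = gradNormSq f x := fun x => Real.sq_sqrt (grad_nonneg _ _)
  have i2 : Integrable (fun x => √(gradNormSq f x) ^ 2) := by
    simp_rw [sqg]; exact grad_int f
  have hcs' := cs_le c1 c2 (fun x => by positivity) (fun x => by positivity) i1 i2
  simp_rw [sqg] at hcs'
  have himm : (∫ x, S x).im = ∫ x, (S x).im := (integral_im hSi).symm
  rw [hibp]
  have : (Complex.I * -∫ x, S x).re = ∫ x, (S x).im := by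
    rw [← himm]; simp
  rw [this]
  calc |∫ x, (S x).im| ≤ ∫ x, 2 * L * ((|η x| * ‖f x‖) * √(gradNormSq f x)) := by
        rw [← Real.norm_eq_abs]
        exact norm_integral_le_of_norm_le ((cs_int c1 c2 i1 i2).const_mul _)
          (Filter.Eventually.of_forall hSim)
    _ = 2 * L * ∫ x, ((|η x| * ‖f x‖) * √(gradNormSq f x)) := integral_const_mul _ _
    _ ≤ 2 * L * (√(∫ x, (|η x| * ‖f x‖) ^ 2) * √(∫ x, gradNormSq f x)) := by gcongr
    _ = _ := by ring

lemma energy_deriv {d : ℕ} {u : ℝ → SchwartzMap (Ed d) ℂ} (hu : IsLinSchrodSol d u)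
    {η : Ed d → ℝ} (hη : ContDiff ℝ ∞ η) (hcs : HasCompactSupport η) (t : ℝ) :
    HasDerivAt (fun s => ∫ x, (|η x| * ‖u s x‖) ^ 2)
      (2 * (Complex.I * ∫ x, ((η x : ℝ) : ℂ) ^ 2 * starRingEnd ℂ (u t x) * (Δ (u t)) x).re) t := by
  obtain ⟨C3, hC3⟩ := sol_bound hu hcs t
  have hη1 : Continuous η := hη.continuous
  obtain ⟨C0, hC0⟩ := hcs.exists_bound_of_continuous hη1
  have hC00 : 0 ≤ C0 := (norm_nonneg _).trans (hC0 0)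
  have key := dint (d := d) (K := tsupport η) hcs t (C0 ^ 2 * (C3 * C3 + C3 * C3))
    (h := fun s x => ((η x : ℝ) : ℂ) ^ 2 * (starRingEnd ℂ (u s x) * u s x))
    (h' := fun s x => ((η x : ℝ) : ℂ) ^ 2 *
      (starRingEnd ℂ (Complex.I * (Δ (u s)) x) * u s x +
        starRingEnd ℂ (u s x) * (Complex.I * (Δ (u s)) x))) ?_ ?_ ?_ ?_ ?_ ?_
  · have hre := Complex.reCLM.hasFDerivAt.comp_hasDerivAt t key
    have e0 : ∀ s, (∫ x, ((η x : ℝ) : ℂ) ^ 2 * (starRingEnd ℂ (u s x) * u s x)) =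
        ((∫ x, (|η x| * ‖u s x‖) ^ 2 : ℝ) : ℂ) := by
      intro s
      rw [← integral_complex_ofReal]
      congr 1
      ext x
      rw [Complex.conj_mul', mul_pow, sq_abs]
      push_cast
      ring
    have e1 : (Complex.reCLM ∘ fun s => ∫ x, ((η x : ℝ) : ℂ) ^ 2 *
        (starRingEnd ℂ (u s x) * u s x)) = fun s => ∫ x, (|η x| * ‖u s x‖) ^ 2 := by
      ext s
      simp only [Function.comp_apply, e0, Complex.reCLM_apply, Complex.ofReal_re]
    rw [e1] at hre
    convert! hre using 1
    have cz : Continuous (fun x => Complex.I * (((η x : ℝ) : ℂ) ^ 2 * starRingEnd ℂ (u t x) *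
        (Δ (u t)) x)) := by
      have := (u t).continuous
      have := (Δ (u t)).continuous
      have := Complex.continuous_conj
      fun_prop
    have iz : Integrable (fun x => Complex.I * (((η x : ℝ) : ℂ) ^ 2 * starRingEnd ℂ (u t x) *
        (Δ (u t)) x)) := by
      refine cz.integrable_of_hasCompactSupport (HasCompactSupport.intro hcs fun x hx => ?_)
      simp [image_eq_zero_of_notMem_tsupport hx]
    rw [← integral_const_mul, Complex.reCLM_apply]
    have ez : ∀ x, ((η x : ℝ) : ℂ) ^ 2 *
      (starRingEnd ℂ (Complex.I * (Δ (u t)) x) * u t x +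
        starRingEnd ℂ (u t x) * (Complex.I * (Δ (u t)) x)) =
        ((2 * (Complex.I * (((η x : ℝ) : ℂ) ^ 2 * starRingEnd ℂ (u t x) *
        (Δ (u t)) x)).re : ℝ) : ℂ) := by
      intro x
      have hh := Complex.add_conj (Complex.I * (((η x : ℝ) : ℂ) ^ 2 * starRingEnd ℂ (u t x) *
        (Δ (u t)) x))
      rw [← hh]
      simp only [map_mul, map_pow, Complex.conj_ofReal, Complex.conj_conj]
      ring
    simp_rw [ez]
    rw [integral_complex_ofReal, Complex.ofReal_re]
    refine Eq.trans ?_ (integral_const_mul (2 : ℝ) _).symm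
    congr 1
    exact (integral_re iz).symm
  · intro s
    have := (u s).continuous
    have := Complex.continuous_conj
    fun_prop
  · intro s
    have := (u s).continuous
    have := (Δ (u s)).continuous
    have := Complex.continuous_conj
    fun_prop
  · intro s x
    have h1 := sol_hasDeriv hu s x
    have h2 : HasDerivAt (fun r => starRingEnd ℂ (u r x))
        (starRingEnd ℂ (Complex.I * (Δ (u s)) x)) s :=
      Complex.conjCLE.hasFDerivAt.comp_hasDerivAt s h1
    exact (h2.mul h1).const_mul _
  · intro s x hx
    simp [image_eq_zero_of_notMem_tsupport hx]
  · intro s x hx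
    simp [image_eq_zero_of_notMem_tsupport hx]
  · intro s hs x hx
    have a1 := hC0 x
    obtain ⟨a3, a4⟩ := hC3 s hs x hx
    have hC30 : 0 ≤ C3 := (norm_nonneg _).trans a4
    rw [norm_mul, norm_pow, Complex.norm_real]
    refine mul_le_mul (pow_le_pow_left₀ (norm_nonneg _) a1 2) ((norm_add_le _ _).trans ?_)
      (norm_nonneg _) (by positivity)
    simp only [norm_mul, RCLike.norm_conj, Complex.norm_I, one_mul]
    gcongr

lemma energy {d : ℕ} {u : ℝ → SchwartzMap (Ed d) ℂ} (hu : IsLinSchrodSol d u)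
    {η : Ed d → ℝ} (hη : ContDiff ℝ ∞ η) (hcs : HasCompactSupport η) {L : ℝ}
    (hL : ∀ x, ‖fderiv ℝ η x‖ ≤ L) (t : ℝ) (ht : 0 ≤ t) :
    √(∫ x, (|η x| * ‖u t x‖) ^ 2) ≤ √(∫ x, (|η x| * ‖u 0 x‖) ^ 2) +
      2 * L * √(∫ x, gradNormSq (u 0) x) * t := by
  have hL0 : 0 ≤ L := (norm_nonneg _).trans (hL 0)
  set g : ℝ → ℝ := fun s => ∫ x, (|η x| * ‖u s x‖) ^ 2 with hg
  set Q := √(∫ x, gradNormSq (u 0) x) with hQ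
  have hQ0 : 0 ≤ Q := Real.sqrt_nonneg _
  have hg0 : ∀ s, 0 ≤ g s := fun s => integral_nonneg fun x => sq_nonneg _
  have hd : ∀ s, ∃ g', HasDerivAt g g' s ∧ |g'| ≤ 4 * L * Q * √(g s) := by
    intro s
    refine ⟨_, energy_deriv hu hη hcs s, ?_⟩
    have := flux_bound (u s) hη hcs hL
    rw [grad_const hu s 0] at this
    rw [abs_mul, abs_two]
    calc _ ≤ 2 * (2 * L * √(g s) * Q) := by gcongr
      _ = _ := by ring
  choose g' hg' hb using hd
  have heps : ∀ ε > 0, √(g t) ≤ √(g 0 + ε) + 2 * L * Q * t := by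
    intro ε hε
    have hpos : ∀ s, 0 < g s + ε := fun s => add_pos_of_nonneg_of_pos (hg0 s) hε
    have := norm_image_sub_le_of_norm_deriv_le_segment' (a := 0) (b := t)
      (f := fun s => √(g s + ε)) (f' := fun s => g' s / (2 * √(g s + ε))) (C := 2 * L * Q)
      (fun s _ => (((hg' s).add_const ε).sqrt (hpos s).ne').hasDerivWithinAt) ?_ t ⟨ht, le_refl _⟩
    · rw [Real.norm_eq_abs, sub_zero] at this
      have h1 : √(g t) ≤ √(g t + ε) := Real.sqrt_le_sqrt (by linarith)
      have h2 := (le_abs_self _).trans this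
      linarith
    · intro s _
      have hp := Real.sqrt_pos.2 (hpos s)
      rw [Real.norm_eq_abs, abs_div, abs_of_pos (by positivity : 0 < 2 * √(g s + ε)),
        div_le_iff₀ (by positivity)]
      have h1 : √(g s) ≤ √(g s + ε) := Real.sqrt_le_sqrt (by linarith)
      calc _ ≤ 4 * L * Q * √(g s) := hb s
        _ ≤ 4 * L * Q * √(g s + ε) := by gcongr
        _ = _ := by ring
  have hlim : Tendsto (fun ε : ℝ => √(g 0 + ε) + 2 * L * Q * t) (nhdsWithin 0 (Set.Ioi 0))
      (nhds (√(g 0 + 0) + 2 * L * Q * t)) := by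
    have : Continuous (fun ε : ℝ => √(g 0 + ε) + 2 * L * Q * t) := by fun_prop
    exact (this.tendsto 0).mono_left nhdsWithin_le_nhds
  rw [add_zero] at hlim
  exact ge_of_tendsto hlim (eventually_mem_nhdsWithin.mono fun ε hε => heps ε hε)

lemma weight_comp {d : ℕ} (f : 𝓢(Ed d, ℂ)) {η ψ : Ed d → ℝ} (hη : Continuous η)
    (hψ : Continuous ψ) (hηs : HasCompactSupport η) (hψs : HasCompactSupport ψ) {δ : ℝ}
    (hδ : ∀ x, |η x - ψ x| ≤ δ) :
    √(∫ x, (|η x| * ‖f x‖) ^ 2) ≤ √(∫ x, (|ψ x| * ‖f x‖) ^ 2) + δ * √(∫ x, ‖f x‖ ^ 2) := by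
  have hδ0 : 0 ≤ δ := (abs_nonneg _).trans (hδ 0)
  have hf := f.continuous
  have c1 : Continuous (fun x => |ψ x| * ‖f x‖) := by fun_prop
  have c2 : Continuous (fun x => δ * ‖f x‖) := by fun_prop
  have c3 : Continuous (fun x => |η x| * ‖f x‖) := by fun_prop
  have i1 : Integrable (fun x => (|ψ x| * ‖f x‖) ^ 2) := by
    refine (c1.pow 2).integrable_of_hasCompactSupport ?_
    refine HasCompactSupport.intro hψs fun x hx => ?_
    simp [image_eq_zero_of_notMem_tsupport hx]
  have i3 : Integrable (fun x => (|η x| * ‖f x‖) ^ 2) := by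
    refine (c3.pow 2).integrable_of_hasCompactSupport ?_
    refine HasCompactSupport.intro hηs fun x hx => ?_
    simp [image_eq_zero_of_notMem_tsupport hx]
  have i2 : Integrable (fun x => (δ * ‖f x‖) ^ 2) := by
    simp_rw [mul_pow]
    exact (sq_int f).const_mul _
  have h := mink c1 c2 (fun x => by positivity) (fun x => by positivity) i1 i2
  have e : √(∫ x, (δ * ‖f x‖) ^ 2) = δ * √(∫ x, ‖f x‖ ^ 2) := by
    simp_rw [mul_pow]
    rw [integral_const_mul, Real.sqrt_mul (sq_nonneg _), Real.sqrt_sq hδ0]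
  rw [e] at h
  refine le_trans (Real.sqrt_le_sqrt (integral_mono i3 ?_ fun x => ?_)) h
  · have h12 := cs_int c1 c2 i1 i2
    have := (i1.add i2).add (h12.const_mul 2)
    refine this.congr (Filter.Eventually.of_forall fun x => ?_)
    simp only [Pi.add_apply]
    ring
  · have h1 : |η x| ≤ |ψ x| + δ := by
      have := abs_sub_abs_le_abs_sub (η x) (ψ x)
      linarith [hδ x]
    simp only
    rw [← add_mul]
    gcongr

lemma mollify {d : ℕ} {η : Ed d → ℝ} {K : ℝ} (hK : 0 ≤ K)
    (hlip : ∀ x y, |η x - η y| ≤ K * dist x y) (hs : HasCompactSupport η) (r : ℝ) (hr : 0 < r) :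
    ∃ ψ : Ed d → ℝ, ContDiff ℝ ∞ ψ ∧ HasCompactSupport ψ ∧ (∀ x, ‖fderiv ℝ ψ x‖ ≤ K) ∧
      ∀ x, |η x - ψ x| ≤ K * r := by
  have hL : LipschitzWith K.toNNReal η := LipschitzWith.of_dist_le_mul fun x y => by
    rw [Real.dist_eq, Real.coe_toNNReal K hK]; exact hlip x y
  have hc : Continuous η := hL.continuous
  let φ : ContDiffBump (0 : Ed d) := ⟨r / 2, r, by linarith, by linarith⟩
  let ψ : Ed d → ℝ := convolution (φ.normed volume) η (ContinuousLinearMap.lsmul ℝ ℝ) volume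
  have hcs : HasCompactSupport (φ.normed volume) := φ.hasCompactSupport_normed
  have hex : ∀ x, Integrable (fun t => φ.normed volume t * η (x - t)) := by
    intro x
    have c : Continuous (fun t => φ.normed volume t * η (x - t)) := by
      have := φ.continuous_normed (μ := volume)
      fun_prop
    exact c.integrable_of_hasCompactSupport hcs.mul_right
  have hψe : ∀ x, ψ x = ∫ t, φ.normed volume t * η (x - t) := fun x => rfl
  have hψlip : LipschitzWith K.toNNReal ψ := by
    refine LipschitzWith.of_dist_le_mul fun x y => ?_
    rw [Real.dist_eq, Real.coe_toNNReal K hK, hψe, hψe, ← integral_sub (hex x) (hex y),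
      ← Real.norm_eq_abs]
    have hi : Integrable (fun t => φ.normed volume t * (K * dist x y)) :=
      φ.integrable_normed.mul_const _
    refine (norm_integral_le_of_norm_le hi (Filter.Eventually.of_forall fun t => ?_)).trans ?_
    · rw [← mul_sub, norm_mul, Real.norm_of_nonneg (φ.nonneg_normed t), Real.norm_eq_abs]
      refine mul_le_mul_of_nonneg_left ?_ (φ.nonneg_normed t)
      refine (hlip _ _).trans ?_
      rw [dist_sub_right]
    · rw [integral_mul_const, φ.integral_normed, one_mul]
  refine ⟨ψ, ?_, ?_, ?_, ?_⟩
  · exact hcs.contDiff_convolution_left _ φ.contDiff_normed hc.locallyIntegrable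
  · exact hcs.convolution _ hs
  · intro x
    have := norm_fderiv_le_of_lipschitz ℝ hψlip (x₀ := x)
    rwa [Real.coe_toNNReal K hK] at this
  · intro x
    have := φ.dist_normed_convolution_le (μ := volume) (g := η) (x₀ := x) (ε := K * r)
      hc.aestronglyMeasurable (fun y hy => by
        rw [Real.dist_eq]
        refine (hlip _ _).trans ?_
        have : dist y x < r := hy
        gcongr)
    rw [Real.dist_eq, abs_sub_comm] at this
    exact this

lemma energy_lip {d : ℕ} {u : ℝ → SchwartzMap (Ed d) ℂ} (hu : IsLinSchrodSol d u)
    {η : Ed d → ℝ} {K : ℝ} (hK : 0 ≤ K)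
    (hlip : ∀ x y, |η x - η y| ≤ K * dist x y) (hs : HasCompactSupport η) (t : ℝ) (ht : 0 ≤ t) :
    √(∫ x, (|η x| * ‖u t x‖) ^ 2) ≤ √(∫ x, (|η x| * ‖u 0 x‖) ^ 2) +
      2 * K * √(∫ x, gradNormSq (u 0) x) * t := by
  have hc : Continuous η := by
    have hL : LipschitzWith K.toNNReal η := LipschitzWith.of_dist_le_mul fun x y => by
      rw [Real.dist_eq, Real.coe_toNNReal K hK]; exact hlip x y
    exact hL.continuous
  set m1 := √(∫ x, ‖u t x‖ ^ 2)
  set m0 := √(∫ x, ‖u 0 x‖ ^ 2)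
  have hr : ∀ r > 0, √(∫ x, (|η x| * ‖u t x‖) ^ 2) ≤ √(∫ x, (|η x| * ‖u 0 x‖) ^ 2) +
      2 * K * √(∫ x, gradNormSq (u 0) x) * t + K * r * (m0 + m1) := by
    intro r hr
    obtain ⟨ψ, h1, h2, h3, h4⟩ := mollify hK hlip hs r hr
    have a1 := weight_comp (u t) hc h1.continuous hs h2 h4
    have a2 := weight_comp (u 0) h1.continuous hc h2 hs
      (fun x => by rw [abs_sub_comm]; exact h4 x)
    have a3 := energy hu h1 h2 h3 t ht
    linarith
  have hlim : Tendsto (fun r : ℝ => √(∫ x, (|η x| * ‖u 0 x‖) ^ 2) +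
      2 * K * √(∫ x, gradNormSq (u 0) x) * t + K * r * (m0 + m1)) (nhdsWithin 0 (Set.Ioi 0))
      (nhds (√(∫ x, (|η x| * ‖u 0 x‖) ^ 2) +
      2 * K * √(∫ x, gradNormSq (u 0) x) * t + K * 0 * (m0 + m1))) := by
    have : Continuous (fun r : ℝ => √(∫ x, (|η x| * ‖u 0 x‖) ^ 2) +
      2 * K * √(∫ x, gradNormSq (u 0) x) * t + K * r * (m0 + m1)) := by fun_prop
    exact (this.tendsto 0).mono_left nhdsWithin_le_nhds
  rw [mul_zero, zero_mul, add_zero] at hlim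
  exact ge_of_tendsto hlim (eventually_mem_nhdsWithin.mono fun r h => hr r h)

lemma cutoff_exists {d : ℕ} (A B : Set (Ed d)) (hA : A.Nonempty) (hAB : 0 < setDist A B) (n : ℕ) :
    ∃ η : Ed d → ℝ, (∀ x y, |η x - η y| ≤ 1 / setDist A B * dist x y) ∧ HasCompactSupport η ∧
      (∀ x, 0 ≤ η x) ∧ (∀ x, η x ≤ 1) ∧ (∀ x ∈ closure A, η x = 0) ∧
      ∀ x ∈ closure B, ‖x‖ ≤ n → η x = 1 := by
  set D := setDist A B with hD
  have hle : ∀ x ∈ B, D ≤ Metric.infDist x A := by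
    intro x hx
    refine (Metric.le_infDist hA).2 fun y hy => ?_
    rw [dist_comm]
    refine csInf_le ⟨0, ?_⟩ ⟨y, hy, x, hx, rfl⟩
    rintro _ ⟨a, _, b, _, rfl⟩
    exact dist_nonneg
  have hle' : ∀ x ∈ closure B, D ≤ Metric.infDist x A := by
    intro x hx
    have hcl : IsClosed {x : Ed d | D ≤ Metric.infDist x A} :=
      isClosed_le continuous_const (Metric.continuous_infDist_pt A)
    exact closure_minimal (fun x hx => hle x hx) hcl hx
  refine ⟨fun x => max 0 (min (min 1 (Metric.infDist x A / D)) ((n + D - ‖x‖) / D)),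
    ?_, ?_, ?_, ?_, ?_, ?_⟩
  · intro x y
    have hp : 0 ≤ 1 / D * dist x y := by positivity
    have h1 : |Metric.infDist x A / D - Metric.infDist y A / D| ≤ 1 / D * dist x y := by
      rw [← sub_div, abs_div, abs_of_pos hAB, div_mul_eq_mul_div, one_mul]
      gcongr
      have := (Metric.lipschitz_infDist_pt A).dist_le_mul x y
      simpa [Real.dist_eq] using this
    have h2 : |(n + D - ‖x‖) / D - (n + D - ‖y‖) / D| ≤ 1 / D * dist x y := by
      rw [← sub_div, abs_div, abs_of_pos hAB, div_mul_eq_mul_div, one_mul]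
      gcongr
      have : (n + D - ‖x‖) - (n + D - ‖y‖) = ‖y‖ - ‖x‖ := by ring
      rw [this, dist_comm, dist_eq_norm]
      exact abs_norm_sub_norm_le y x
    refine (abs_max_sub_max_le_max _ _ _ _).trans (max_le (by simpa using hp) ?_)
    refine (abs_min_sub_min_le_max _ _ _ _).trans (max_le ?_ h2)
    exact (abs_min_sub_min_le_max _ _ _ _).trans (max_le (by simpa using hp) h1)
  · refine HasCompactSupport.intro (isCompact_closedBall (0 : Ed d) (n + D)) fun x hx => ?_
    rw [Metric.mem_closedBall, dist_zero_right, not_le] at hx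
    refine max_eq_left ((min_le_right _ _).trans ?_)
    exact div_nonpos_of_nonpos_of_nonneg (by linarith) hAB.le
  · intro x; exact le_max_left _ _
  · intro x
    exact max_le zero_le_one ((min_le_left _ _).trans (min_le_left _ _))
  · intro x hx
    have : Metric.infDist x A = 0 := (Metric.mem_closure_iff_infDist_zero hA).1 hx
    refine max_eq_left ((min_le_left _ _).trans ((min_le_right _ _).trans ?_))
    rw [this, zero_div]
  · intro x hx hn
    have h1 : 1 ≤ Metric.infDist x A / D := by
      rw [le_div_iff₀ hAB, one_mul]; exact hle' x hx
    have h2 : 1 ≤ (n + D - ‖x‖) / D := by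
      rw [le_div_iff₀ hAB]; linarith
    simp only
    rw [min_eq_left h1, min_eq_left h2]
    exact max_eq_right zero_le_one

lemma main_bound {d : ℕ} {u : ℝ → SchwartzMap (Ed d) ℂ} (hu : IsLinSchrodSol d u)
    (A B : Set (Ed d)) (hA : A.Nonempty) (hAB : 0 < setDist A B)
    (t : ℝ) (ht : 0 ≤ t) :
    √(∫ x in B, ‖u t x‖ ^ 2) ≤
      2 * t * √(∫ x, gradNormSq (u 0) x) / setDist A B + √(∫ x in Aᶜ, ‖u 0 x‖ ^ 2) := by
  set D := setDist A B with hD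
  set R := 2 * t * √(∫ x, gradNormSq (u 0) x) / D + √(∫ x in Aᶜ, ‖u 0 x‖ ^ 2) with hR
  have hR0 : 0 ≤ R := by positivity
  have hn : ∀ n : ℕ, ∫ x in closure B ∩ Metric.closedBall 0 (n : ℝ), ‖u t x‖ ^ 2 ≤ R ^ 2 := by
    intro n
    obtain ⟨η, h1, h2, h3, h4, h5, h6⟩ := cutoff_exists A B hA hAB n
    have hK : 0 ≤ 1 / D := by positivity
    have he := energy_lip hu hK h1 h2 t ht
    have hηc : Continuous η := by
      have hL : LipschitzWith (1 / D).toNNReal η := LipschitzWith.of_dist_le_mul fun x y => by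
        rw [Real.dist_eq, Real.coe_toNNReal _ hK]; exact h1 x y
      exact hL.continuous
    have hintg : ∀ s, Integrable (fun x => (|η x| * ‖u s x‖) ^ 2) := by
      intro s
      have := (u s).continuous
      have c : Continuous (fun x => (|η x| * ‖u s x‖) ^ 2) := by fun_prop
      refine c.integrable_of_hasCompactSupport (HasCompactSupport.intro h2 fun x hx => ?_)
      simp [image_eq_zero_of_notMem_tsupport hx]
    have hmeas : MeasurableSet (closure B ∩ Metric.closedBall (0 : Ed d) (n : ℝ)) :=
      isClosed_closure.measurableSet.inter Metric.isClosed_closedBall.measurableSet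
    have hl : ∫ x in closure B ∩ Metric.closedBall 0 (n : ℝ), ‖u t x‖ ^ 2 ≤
        ∫ x, (|η x| * ‖u t x‖) ^ 2 := by
      calc _ = ∫ x in closure B ∩ Metric.closedBall 0 (n : ℝ), (|η x| * ‖u t x‖) ^ 2 := by
            refine setIntegral_congr_fun hmeas fun x hx => ?_
            have : η x = 1 := h6 x hx.1 (by simpa using hx.2)
            simp [this]
        _ ≤ _ := setIntegral_le_integral (hintg t) (Filter.Eventually.of_forall fun x => sq_nonneg _)
    have hr : ∫ x, (|η x| * ‖u 0 x‖) ^ 2 ≤ ∫ x in Aᶜ, ‖u 0 x‖ ^ 2 := by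
      calc ∫ x, (|η x| * ‖u 0 x‖) ^ 2 = ∫ x in (closure A)ᶜ, (|η x| * ‖u 0 x‖) ^ 2 := by
            refine (setIntegral_eq_integral_of_forall_compl_eq_zero fun x hx => ?_).symm
            simp [h5 x (not_not.mp hx)]
        _ ≤ ∫ x in (closure A)ᶜ, ‖u 0 x‖ ^ 2 := by
            refine integral_mono (hintg 0).integrableOn (sq_int (u 0)).integrableOn fun x => ?_
            have : |η x| ≤ 1 := by rw [abs_of_nonneg (h3 x)]; exact h4 x
            simp only
            refine pow_le_pow_left₀ (by positivity) ?_ 2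
            exact mul_le_of_le_one_left (norm_nonneg _) this
        _ ≤ _ := by
            refine setIntegral_mono_set (sq_int (u 0)).integrableOn
              (Filter.Eventually.of_forall fun x => sq_nonneg _) ?_
            exact (Set.compl_subset_compl.2 subset_closure).eventuallyLE
    have hfin : √(∫ x in closure B ∩ Metric.closedBall 0 (n : ℝ), ‖u t x‖ ^ 2) ≤ R := by
      refine (Real.sqrt_le_sqrt hl).trans (he.trans ?_)
      have := Real.sqrt_le_sqrt hr
      have e : 2 * (1 / D) * √(∫ x, gradNormSq (u 0) x) * t =
        2 * t * √(∫ x, gradNormSq (u 0) x) / D := by ring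
      rw [e, hR]
      linarith
    exact (Real.sqrt_le_left hR0).1 hfin
  have hU : (⋃ n : ℕ, closure B ∩ Metric.closedBall (0 : Ed d) (n : ℝ)) = closure B := by
    rw [← Set.inter_iUnion, Metric.iUnion_closedBall_nat, Set.inter_univ]
  have hlim := tendsto_setIntegral_of_monotone (μ := (volume : Measure (Ed d)))
    (f := fun x => ‖u t x‖ ^ 2) (s := fun n : ℕ => closure B ∩ Metric.closedBall (0 : Ed d) (n : ℝ))
    (fun n => isClosed_closure.measurableSet.inter Metric.isClosed_closedBall.measurableSet)
    (fun m n hmn => Set.inter_subset_inter_right _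
      (Metric.closedBall_subset_closedBall (by exact_mod_cast hmn)))
    (sq_int (u t)).integrableOn
  rw [hU] at hlim
  have h1 := le_of_tendsto hlim (Filter.Eventually.of_forall hn)
  rw [Real.sqrt_le_left hR0]
  refine le_trans ?_ h1
  refine setIntegral_mono_set (sq_int (u t)).integrableOn
    (Filter.Eventually.of_forall fun x => sq_nonneg _) ?_
  exact (subset_closure : B ⊆ closure B).eventuallyLE

/-- For a Schwartz solution of the linear Schrödinger equation and nonempty sets
`A, B` with `dist(A,B) > 0`, one has
`‖u(t)‖_{L²(B)} ≤ 2 t ‖∇u(0)‖₂ / dist(A,B) + ‖u(0)‖_{L²(ℝ^d ∖ A)}` for all `t ≥ 0`. -/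
theorem disturbance_estimate_linear
    {d : ℕ} (hd : 1 ≤ d) (u : ℝ → SchwartzMap (Ed d) ℂ)
    (hu : IsLinSchrodSol d u)
    (A B : Set (Ed d)) (hA : A.Nonempty) (hB : B.Nonempty)
    (hAB : 0 < setDist A B)
    (t : ℝ) (ht : 0 ≤ t) :
    L2On B (fun x => u t x) ≤
      2 * t * gradL2 (fun x => u 0 x) / setDist A B + L2On Aᶜ (fun x => u 0 x) := by
  unfold L2On gradL2
  simp only [← Real.sqrt_eq_rpow]
  exact main_bound hu A B hA hAB t ht
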